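/- arXiv:2003.10081 — 9 statements merged into one kernel-verified Lean document; each statement's English description precedes it below -/
import Mathlib

section
/- For any real gravitational constant g and any two states L = (h_L, vx_L, vy_L, Bx_L, By_L) with bottom value b_L and R = (h_R, vx_R, vy_R, Bx_R, By_R) with bottom value b_R, the EC flux F̃₁(L,R) satisfies the entropy conservation condition [V]·F̃₁(L,R) = [ψ₁] − [Φ]⟨hBx⟩ + g[h·b·vx] − g[h·vx]⟨b⟩. -/
open scoped BigOperators
noncomputable section
open Matrix

/-- A state of the 1D (x-split) shallow water MHD system together with
the bottom topography value `b`. -/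
structure SWState where
  h : ℝ
  vx : ℝ
  vy : ℝ
  Bx : ℝ
  By : ℝ
  b : ℝ

namespace SWMHD

/-- Mean `⟨a⟩ = (a_L + a_R)/2` of an expression in the state variables. -/
def amean (f : SWState → ℝ) (L R : SWState) : ℝ := (f L + f R) / 2

/-- Jump `[a] = a_R − a_L` of an expression in the state variables. -/
def ajump (f : SWState → ℝ) (L R : SWState) : ℝ := f R - f L

/-- Entropy variables `V`. -/
def entropyVars (g : ℝ) (U : SWState) : Fin 5 → ℝ :=
  ![g * (U.h + U.b) - (U.vx ^ 2 + U.vy ^ 2 + U.Bx ^ 2 + U.By ^ 2) / 2,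
    U.vx, U.vy, U.Bx, U.By]

/-- Jump of the entropy variables. -/
def vjump (g : ℝ) (L R : SWState) : Fin 5 → ℝ :=
  fun k => entropyVars g R k - entropyVars g L k

/-- Entropy potential `ψ₁ = ½ g h² vx`. -/
def psi1 (g : ℝ) (U : SWState) : ℝ := g * U.h ^ 2 * U.vx / 2

/-- `Φ = vx Bx + vy By`. -/
def Phi (U : SWState) : ℝ := U.vx * U.Bx + U.vy * U.By

/-- The physical flux `F₁` of the x-split system. -/
def physFlux (g : ℝ) (U : SWState) : Fin 5 → ℝ :=
  ![U.h * U.vx,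
    U.h * U.vx ^ 2 - U.h * U.Bx ^ 2 + g * U.h ^ 2 / 2,
    U.h * U.vx * U.vy - U.h * U.Bx * U.By,
    0,
    U.h * (U.vx * U.By - U.Bx * U.vy)]

/-- The physical entropy flux `q₁`. -/
def q1 (g : ℝ) (U : SWState) : ℝ :=
  ((U.vx ^ 2 + U.vy ^ 2 + U.Bx ^ 2 + U.By ^ 2) / 2 + g * U.h + g * U.b) * U.h * U.vx
    - U.h * U.Bx * (U.vx * U.Bx + U.vy * U.By)

/-- The entropy conservative (EC) two-point flux `F̃₁(L,R)`. -/
def ecFlux (g : ℝ) (L R : SWState) : Fin 5 → ℝ :=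
  ![amean (fun U => U.h) L R * amean (fun U => U.vx) L R,
    amean (fun U => U.h) L R * (amean (fun U => U.vx) L R) ^ 2
      + g / 2 * amean (fun U => U.h ^ 2) L R
      - amean (fun U => U.h * U.Bx) L R * amean (fun U => U.Bx) L R
      + g * (amean (fun U => U.h * U.b) L R
             - amean (fun U => U.h) L R * amean (fun U => U.b) L R),
    amean (fun U => U.h) L R * amean (fun U => U.vx) L R * amean (fun U => U.vy) L R
      - amean (fun U => U.h * U.Bx) L R * amean (fun U => U.By) L R,
    amean (fun U => U.h) L R * amean (fun U => U.vx) L R * amean (fun U => U.Bx) L R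
      - amean (fun U => U.h * U.Bx) L R * amean (fun U => U.vx) L R,
    amean (fun U => U.h) L R * amean (fun U => U.vx) L R * amean (fun U => U.By) L R
      - amean (fun U => U.h * U.Bx) L R * amean (fun U => U.vy) L R]

/-- The entropy conservation condition `[V]·F = [ψ₁] − [Φ]⟨hBx⟩ + g[h b vx] − g[h vx]⟨b⟩`
for a two-point numerical flux `F`. -/
def ecCondition (g : ℝ) (F : Fin 5 → ℝ) (L R : SWState) : Prop :=
  vjump g L R ⬝ᵥ F
    = ajump (psi1 g) L R
      - ajump Phi L R * amean (fun U => U.h * U.Bx) L R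
      + g * ajump (fun U => U.h * U.b * U.vx) L R
      - g * ajump (fun U => U.h * U.vx) L R * amean (fun U => U.b) L R

/-- The numerical entropy flux `q̃` built from a two-point flux value `F`. -/
def numEntropyFlux (g : ℝ) (F : Fin 5 → ℝ) (L R : SWState) : ℝ :=
  (fun k => (entropyVars g L k + entropyVars g R k) / 2) ⬝ᵥ F
    + amean Phi L R * amean (fun U => U.h * U.Bx) L R
    - amean (psi1 g) L R
    + g * amean (fun U => U.h * U.vx) L R * amean (fun U => U.b) L R
    - g * amean (fun U => U.h * U.b * U.vx) L R

/-- Conservative variables `U = (h, h vx, h vy, h Bx, h By)`. -/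
def consVar (U : SWState) : Fin 5 → ℝ :=
  ![U.h, U.h * U.vx, U.h * U.vy, U.h * U.Bx, U.h * U.By]

/-- The source vector `Ψ = (0,0,0,vx,vy)`. -/
def PsiVec (U : SWState) : Fin 5 → ℝ := ![0, 0, 0, U.vx, U.vy]

/-- The bottom-topography source vector `G₁ = (0, g h, 0, 0, 0)`. -/
def G1Vec (g : ℝ) (U : SWState) : Fin 5 → ℝ := ![0, g * U.h, 0, 0, 0]

/-- The mathematical entropy (total energy). -/
def entropyFn (g : ℝ) (U : SWState) : ℝ :=
  U.h * (U.vx ^ 2 + U.vy ^ 2 + U.Bx ^ 2 + U.By ^ 2) / 2 + g * U.h ^ 2 / 2 + g * U.h * U.b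

end SWMHD

open SWMHD

/-!
The jump obeys the Leibniz rule `[ab] = [a]⟨b⟩ + ⟨a⟩[b]`. Split the flux into an advective part
`⟨h⟩⟨vx⟩ (1, ⟨vx⟩, ⟨vy⟩, ⟨Bx⟩, ⟨By⟩)`, a pressure in the normal momentum, and a magnetic part
`⟨hBx⟩ (0, ⟨Bx⟩, ⟨By⟩, ⟨vx⟩, ⟨vy⟩)`. Tested against `[V]`, the advective part loses all the
quadratic terms of `V`, leaving `g⟨h⟩⟨vx⟩[h + b]`, while the magnetic part gives `[Φ]⟨hBx⟩`. What is
left of the advective part combines with the two terms of the pressure, again by the Leibniz rule,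
into `[ψ₁]` and the bottom topography terms.
-/

namespace SWMHD

section Jump

variable (a b c : SWState → ℝ) (L R : SWState)

lemma ajump_add : ajump (fun U => a U + b U) L R = ajump a L R + ajump b L R := by
  simp only [ajump]
  ring

lemma ajump_sub : ajump (fun U => a U - b U) L R = ajump a L R - ajump b L R := by
  simp only [ajump]
  ring

lemma ajump_const_mul (r : ℝ) : ajump (fun U => r * a U) L R = r * ajump a L R := by
  simp only [ajump]
  ring

lemma ajump_mul :
    ajump (fun U => a U * b U) L R = ajump a L R * amean b L R + amean a L R * ajump b L R := by
  simp only [ajump, amean]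
  ring

lemma ajump_sq : ajump (fun U => a U ^ 2) L R = 2 * amean a L R * ajump a L R := by
  simp only [sq, ajump_mul]
  ring

lemma ajump_sq_mul :
    ajump (fun U => a U ^ 2 * b U) L R =
      2 * amean a L R * amean b L R * ajump a L R
        + amean (fun U => a U ^ 2) L R * ajump b L R := by
  rw [ajump_mul, ajump_sq]
  ring

lemma ajump_mul_mul_sub_ajump_mul_mul_amean :
    ajump (fun U => a U * b U * c U) L R - ajump (fun U => a U * c U) L R * amean b L R =
      amean a L R * amean c L R * ajump b L R
        + (amean (fun U => a U * b U) L R - amean a L R * amean b L R) * ajump c L R := by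
  rw [ajump_mul (fun U => a U * b U), ajump_mul a b, ajump_mul a c]
  ring

end Jump

variable (g : ℝ) (L R : SWState)

/-- The vector `(1, ⟨vx⟩, ⟨vy⟩, ⟨Bx⟩, ⟨By⟩)` whose multiple by the mean mass flux `⟨h⟩⟨vx⟩` is the
advective part of the EC flux. -/
def advectedMean : Fin 5 → ℝ :=
  ![1, amean (·.vx) L R, amean (·.vy) L R, amean (·.Bx) L R, amean (·.By) L R]

/-- The vector `(0, ⟨Bx⟩, ⟨By⟩, ⟨vx⟩, ⟨vy⟩)` whose multiple by `-⟨hBx⟩` is the magnetic part of the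
EC flux. -/
def magneticMean : Fin 5 → ℝ :=
  ![0, amean (·.Bx) L R, amean (·.By) L R, amean (·.vx) L R, amean (·.vy) L R]

/-- The pressure `½g⟨h²⟩ + g(⟨hb⟩ - ⟨h⟩⟨b⟩)` of the EC flux: the mean hydrostatic pressure with a
correction for the bottom topography. -/
def ecPressure : ℝ :=
  g / 2 * amean (fun U => U.h ^ 2) L R
    + g * (amean (fun U => U.h * U.b) L R - amean (·.h) L R * amean (·.b) L R)

lemma ecFlux_eq_advective_add_pressure_sub_magnetic :
    ecFlux g L R =
      (amean (·.h) L R * amean (·.vx) L R) • advectedMean L R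
        + Pi.single 1 (ecPressure g L R)
        - amean (fun U => U.h * U.Bx) L R • magneticMean L R := by
  ext k
  fin_cases k <;>
    simp only [ecFlux, advectedMean, magneticMean, ecPressure, Pi.sub_apply, Pi.add_apply,
      Pi.smul_apply, Pi.single_apply, smul_eq_mul, cons_val, Fin.reduceFinMk, Fin.reduceEq,
      if_true, if_false] <;>
    ring

lemma vjump_zero :
    vjump g L R 0 =
      g * (ajump (·.h) L R + ajump (·.b) L R)
        - (amean (·.vx) L R * ajump (·.vx) L R + amean (·.vy) L R * ajump (·.vy) L R
          + amean (·.Bx) L R * ajump (·.Bx) L R + amean (·.By) L R * ajump (·.By) L R) :=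
  calc
    vjump g L R 0 =
        ajump (fun U => g * (U.h + U.b)
          - 2⁻¹ * (U.vx ^ 2 + U.vy ^ 2 + U.Bx ^ 2 + U.By ^ 2)) L R := by
      simp only [vjump, entropyVars, ajump, cons_val_zero]
      ring
    _ = _ := by
      simp only [ajump_sub, ajump_const_mul, ajump_add, ajump_sq]
      ring

lemma vjump_dotProduct (w : Fin 5 → ℝ) :
    vjump g L R ⬝ᵥ w =
      vjump g L R 0 * w 0 + ajump (·.vx) L R * w 1 + ajump (·.vy) L R * w 2
        + ajump (·.Bx) L R * w 3 + ajump (·.By) L R * w 4 :=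
  Fin.sum_univ_five _

lemma vjump_dotProduct_advectedMean :
    vjump g L R ⬝ᵥ advectedMean L R = g * (ajump (·.h) L R + ajump (·.b) L R) := by
  rw [vjump_dotProduct, vjump_zero]
  simp only [advectedMean, cons_val]
  ring

lemma ajump_Phi :
    ajump Phi L R =
      ajump (·.vx) L R * amean (·.Bx) L R + amean (·.vx) L R * ajump (·.Bx) L R
        + (ajump (·.vy) L R * amean (·.By) L R + amean (·.vy) L R * ajump (·.By) L R) := by
  unfold Phi
  rw [ajump_add, ajump_mul, ajump_mul]

lemma vjump_dotProduct_magneticMean : vjump g L R ⬝ᵥ magneticMean L R = ajump Phi L R := by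
  rw [vjump_dotProduct, ajump_Phi]
  simp only [magneticMean, cons_val]
  ring

lemma vjump_dotProduct_ecFlux :
    vjump g L R ⬝ᵥ ecFlux g L R =
      amean (·.h) L R * amean (·.vx) L R * (g * (ajump (·.h) L R + ajump (·.b) L R))
        + ajump (·.vx) L R * ecPressure g L R
        - amean (fun U => U.h * U.Bx) L R * ajump Phi L R := by
  rw [ecFlux_eq_advective_add_pressure_sub_magnetic, dotProduct_sub, dotProduct_add,
    dotProduct_smul, dotProduct_smul, dotProduct_single, vjump_dotProduct_advectedMean,
    vjump_dotProduct_magneticMean]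
  rfl

lemma ajump_psi1 :
    ajump (psi1 g) L R =
      g * (amean (·.h) L R * amean (·.vx) L R) * ajump (·.h) L R
        + g / 2 * amean (fun U => U.h ^ 2) L R * ajump (·.vx) L R :=
  calc
    ajump (psi1 g) L R = g / 2 * ajump (fun U => U.h ^ 2 * U.vx) L R := by
      rw [← ajump_const_mul]
      simp only [ajump, psi1]
      ring
    _ = _ := by
      rw [ajump_sq_mul]
      ring

end SWMHD

/-- the EC flux `F̃₁(L,R)` satisfies the entropy conservation condition
`[V]·F̃₁(L,R) = [ψ₁] − [Φ]⟨hBx⟩ + g[h b vx] − g[h vx]⟨b⟩`. -/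
theorem ecFlux_satisfies_ecCondition (g : ℝ) (L R : SWState) :
    ecCondition g (ecFlux g L R) L R := by
  have hbottom := ajump_mul_mul_sub_ajump_mul_mul_amean (·.h) (·.b) (·.vx) L R
  rw [ecCondition, vjump_dotProduct_ecFlux, ajump_psi1, ecPressure]
  linear_combination -g * hbottom
end
end

section
/- Let F be a symmetric two-point numerical flux that satisfies the entropy conservation condition for every pair of states. Then for any three consecutive grid states U_{i−1}, U_i, U_{i+1} with bottom values b_{i−1}, b_i, b_{i+1}, the telescoping identity V_i·(F(U_i,U_{i+1}) − F(U_{i−1},U_i)) + Φ_i·(⟨hBx⟩_{i+1/2} − ⟨hBx⟩_{i−1/2}) + g·h_i·vx_i·(⟨b⟩_{i+1/2} − ⟨b⟩_{i−1/2}) = q̃(U_i,U_{i+1}) − q̃(U_{i−1},U_i) holds, where ⟨a⟩_{i±1/2} denotes the mean of a over the corresponding pair of adjacent grid points and q̃ is the numerical entropy flux built from F. -/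
open scoped BigOperators
noncomputable section
open Matrix

open SWMHD

/-!
Each interface, seen from one of its end nodes, has a one-sided entropy flux. The numerical entropy
flux is the mean of the two one-sided fluxes, and entropy conservation says that they coincide;
hence each equals the numerical entropy flux. Evaluating the fluxes of both interfaces adjacent to a
node at that common node, the entropy potential and `g h b vx` cancel in the difference.
-/

namespace SWMHD

section TwoPoint

variable {f : SWState → ℝ} {L R : SWState}

lemma amean_eq_left_of_ajump_eq_zero (hf : ajump f L R = 0) : amean f L R = f L := by
  unfold ajump at hf
  unfold amean
  linear_combination hf / 2

lemma amean_eq_right_of_ajump_eq_zero (hf : ajump f L R = 0) : amean f L R = f R := by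
  unfold ajump at hf
  unfold amean
  linear_combination -hf / 2

end TwoPoint

section OneSided

/-- The entropy flux through the interface between `L` and `R` as seen from the node `U`, which is
meant to be `L` or `R`: the two-point flux value `F` and the interface means `⟨hBx⟩`, `⟨b⟩` are
weighted by the values at `U` of `V`, `Φ` and `g h vx`, and the potential terms `ψ₁` and `g h b vx`
at `U` are subtracted. -/
def oneSidedEntropyFlux (g : ℝ) (F : Fin 5 → ℝ) (L R U : SWState) : ℝ :=
  entropyVars g U ⬝ᵥ F
    + Phi U * amean (fun W => W.h * W.Bx) L R
    - psi1 g U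
    + g * (U.h * U.vx) * amean (fun W => W.b) L R
    - g * (U.h * U.b * U.vx)

variable (g : ℝ) (F : Fin 5 → ℝ) (L R : SWState)

lemma vjump_dotProduct_s2 :
    vjump g L R ⬝ᵥ F = ajump (fun U => entropyVars g U ⬝ᵥ F) L R :=
  sub_dotProduct _ _ _

lemma entropyVars_mean_dotProduct :
    (fun k => (entropyVars g L k + entropyVars g R k) / 2) ⬝ᵥ F
      = amean (fun U => entropyVars g U ⬝ᵥ F) L R := by
  simp only [amean, dotProduct, ← Finset.sum_add_distrib, Finset.sum_div]
  exact Finset.sum_congr rfl fun k _ => by ring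

lemma numEntropyFlux_eq_amean_oneSidedEntropyFlux :
    numEntropyFlux g F L R = amean (oneSidedEntropyFlux g F L R) L R := by
  rw [numEntropyFlux, entropyVars_mean_dotProduct]
  simp only [amean, oneSidedEntropyFlux]
  ring

lemma ecCondition_iff_ajump_oneSidedEntropyFlux_eq_zero :
    ecCondition g F L R ↔ ajump (oneSidedEntropyFlux g F L R) L R = 0 := by
  rw [ecCondition, vjump_dotProduct_s2, ← sub_eq_zero]
  refine Eq.congr_left ?_
  simp only [ajump, oneSidedEntropyFlux]
  ring

variable {g F L R}

lemma numEntropyFlux_eq_oneSidedEntropyFlux_left (hF : ecCondition g F L R) :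
    numEntropyFlux g F L R = oneSidedEntropyFlux g F L R L := by
  rw [numEntropyFlux_eq_amean_oneSidedEntropyFlux]
  exact amean_eq_left_of_ajump_eq_zero
    ((ecCondition_iff_ajump_oneSidedEntropyFlux_eq_zero g F L R).mp hF)

lemma numEntropyFlux_eq_oneSidedEntropyFlux_right (hF : ecCondition g F L R) :
    numEntropyFlux g F L R = oneSidedEntropyFlux g F L R R := by
  rw [numEntropyFlux_eq_amean_oneSidedEntropyFlux]
  exact amean_eq_right_of_ajump_eq_zero
    ((ecCondition_iff_ajump_oneSidedEntropyFlux_eq_zero g F L R).mp hF)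

end OneSided

end SWMHD

theorem telescoping_entropy_identity_general {g : ℝ} {Fm Fp : Fin 5 → ℝ} {Um Ui Up : SWState}
    (hm : ecCondition g Fm Um Ui) (hp : ecCondition g Fp Ui Up) :
    entropyVars g Ui ⬝ᵥ (Fp - Fm)
      + Phi Ui * (amean (fun U => U.h * U.Bx) Ui Up - amean (fun U => U.h * U.Bx) Um Ui)
      + g * Ui.h * Ui.vx * (amean (fun U => U.b) Ui Up - amean (fun U => U.b) Um Ui)
      = numEntropyFlux g Fp Ui Up - numEntropyFlux g Fm Um Ui := by
  rw [numEntropyFlux_eq_oneSidedEntropyFlux_left hp,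
    numEntropyFlux_eq_oneSidedEntropyFlux_right hm, dotProduct_sub]
  unfold oneSidedEntropyFlux
  ring

/-- telescoping identity for a symmetric two-point flux satisfying
the entropy conservation condition. -/
theorem telescoping_entropy_identity (g : ℝ)
    (F : SWState → SWState → (Fin 5 → ℝ))
    (hsymm : ∀ L R, F L R = F R L)
    (hEC : ∀ L R, ecCondition g (F L R) L R)
    (Um Ui Up : SWState) :
    entropyVars g Ui ⬝ᵥ (fun k => F Ui Up k - F Um Ui k)
      + Phi Ui * (amean (fun U => U.h * U.Bx) Ui Up - amean (fun U => U.h * U.Bx) Um Ui)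
      + g * Ui.h * Ui.vx * (amean (fun U => U.b) Ui Up - amean (fun U => U.b) Um Ui)
      = numEntropyFlux g (F Ui Up) Ui Up - numEntropyFlux g (F Um Ui) Um Ui :=
  telescoping_entropy_identity_general (hEC Um Ui) (hEC Ui Up)
end
end

section
/- (Well-balanced property, lake at rest.) Let g and C be real numbers and let three consecutive grid states U_{i−1}, U_i, U_{i+1} with bottom values b_{i−1}, b_i, b_{i+1} satisfy vx_j = vy_j = Bx_j = By_j = 0 and h_j + b_j = C for j = i−1, i, i+1. Then the right-hand side of the semi-discrete EC scheme at grid point i vanishes: F̃₁(U_i,U_{i+1}) − F̃₁(U_{i−1},U_i) + Ψ_iᵀ(⟨hBx⟩_{i+1/2} − ⟨hBx⟩_{i−1/2}) + (G₁)_iᵀ(⟨b⟩_{i+1/2} − ⟨b⟩_{i−1/2}) = 0 ∈ ℝ⁵, where Ψ_i = (0,0,0,vx_i,vy_i), (G₁)_i = (0, g·h_i, 0, 0, 0), and ⟨a⟩_{i±1/2} denotes the mean over the corresponding pair of grid points. In particular the scheme preserves the steady state of a lake at rest with zero magnetic field. -/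
open scoped BigOperators
noncomputable section
open Matrix

open SWMHD

/-!
Once the interface means `⟨vx⟩` and `⟨hBx⟩` vanish, only the hydrostatic part of the momentum flux
survives. Its difference across a cell, together with the source
`g h_i (⟨b⟩_{i+1/2} - ⟨b⟩_{i-1/2})`, equals
`½ g (⟨h⟩[h + b]_{i-1/2} + ⟨h⟩[h + b]_{i+1/2})`, a discretization of `Δx g h ∂ₓ(h + b)`.
A flat surface makes both jumps vanish.
-/

namespace SWMHD

/-- The free-surface elevation `η = h + b`, which is constant over a lake at rest. -/
def surfaceLevel (U : SWState) : ℝ := U.h + U.b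

/-- The part of the momentum component of `ecFlux` carrying neither velocity nor magnetic field:
the numerical counterpart of the hydrostatic pressure `½ g h²`. -/
def hydrostaticFlux (g : ℝ) (L R : SWState) : ℝ :=
  g / 2 * amean (fun U => U.h ^ 2) L R
    + g * (amean (fun U => U.h * U.b) L R
      - amean (fun U => U.h) L R * amean (fun U => U.b) L R)

/-- The right-hand side of the semi-discrete EC scheme at the grid point `M` with neighbours
`L` and `R`, up to the factor `-1/Δx`. -/
def ecResidual (g : ℝ) (L M R : SWState) : Fin 5 → ℝ := fun k =>
  ecFlux g M R k - ecFlux g L M k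
    + PsiVec M k * (amean (fun U => U.h * U.Bx) M R - amean (fun U => U.h * U.Bx) L M)
    + G1Vec g M k * (amean (fun U => U.b) M R - amean (fun U => U.b) L M)

theorem amean_sub_amean (f : SWState → ℝ) (L M R : SWState) :
    amean f M R - amean f L M = (ajump f L M + ajump f M R) / 2 := by
  simp only [amean, ajump]
  ring

theorem hydrostaticFlux_eq_left (g : ℝ) (L R : SWState) :
    hydrostaticFlux g L R = g / 2 * (L.h ^ 2
      + (amean (fun U => U.h) L R * ajump surfaceLevel L R - L.h * ajump (fun U => U.b) L R)) := by
  simp only [hydrostaticFlux, surfaceLevel, amean, ajump]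
  ring

theorem hydrostaticFlux_eq_right (g : ℝ) (L R : SWState) :
    hydrostaticFlux g L R = g / 2 * (R.h ^ 2
      - (amean (fun U => U.h) L R * ajump surfaceLevel L R - R.h * ajump (fun U => U.b) L R)) := by
  simp only [hydrostaticFlux, surfaceLevel, amean, ajump]
  ring

theorem hydrostaticFlux_sub_add_source (g : ℝ) (L M R : SWState) :
    hydrostaticFlux g M R - hydrostaticFlux g L M
        + g * M.h * (amean (fun U => U.b) M R - amean (fun U => U.b) L M)
      = g / 2 * (amean (fun U => U.h) L M * ajump surfaceLevel L M
          + amean (fun U => U.h) M R * ajump surfaceLevel M R) := by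
  rw [hydrostaticFlux_eq_left g M R, hydrostaticFlux_eq_right g L M, amean_sub_amean]
  ring

theorem ecFlux_eq_hydrostaticFlux (g : ℝ) {L R : SWState}
    (hvx : amean (fun U => U.vx) L R = 0) (hBx : amean (fun U => U.h * U.Bx) L R = 0) :
    ecFlux g L R = ![0, hydrostaticFlux g L R, 0, 0, 0] := by
  simp [ecFlux, hydrostaticFlux, hvx, hBx]

theorem ecResidual_eq_surfaceLevel_jumps (g : ℝ) {L M R : SWState}
    (hvxL : amean (fun U => U.vx) L M = 0) (hvxR : amean (fun U => U.vx) M R = 0)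
    (hBxL : amean (fun U => U.h * U.Bx) L M = 0) (hBxR : amean (fun U => U.h * U.Bx) M R = 0) :
    ecResidual g L M R =
      ![0, g / 2 * (amean (fun U => U.h) L M * ajump surfaceLevel L M
          + amean (fun U => U.h) M R * ajump surfaceLevel M R), 0, 0, 0] := by
  rw [← hydrostaticFlux_sub_add_source]
  funext k
  rw [ecResidual, ecFlux_eq_hydrostaticFlux g hvxL hBxL, ecFlux_eq_hydrostaticFlux g hvxR hBxR,
    hBxL, hBxR]
  fin_cases k <;> simp [G1Vec]

end SWMHD

theorem well_balanced_lake_at_rest_general (g : ℝ) {Um Ui Up : SWState}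
    (hvxm : amean (fun U => U.vx) Um Ui = 0) (hvxp : amean (fun U => U.vx) Ui Up = 0)
    (hBxm : amean (fun U => U.h * U.Bx) Um Ui = 0) (hBxp : amean (fun U => U.h * U.Bx) Ui Up = 0)
    (hηm : ajump surfaceLevel Um Ui = 0) (hηp : ajump surfaceLevel Ui Up = 0) :
    ecResidual g Um Ui Up = 0 := by
  rw [ecResidual_eq_surfaceLevel_jumps g hvxm hvxp hBxm hBxp, hηm, hηp]
  simp

/-- well-balanced property (lake at rest).  If the velocity and
magnetic field vanish and `h + b = C` at three consecutive grid points, then the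
right-hand side of the semi-discrete EC scheme at the middle point vanishes. -/
theorem well_balanced_lake_at_rest (g C : ℝ) (Um Ui Up : SWState)
    (hm : Um.vx = 0 ∧ Um.vy = 0 ∧ Um.Bx = 0 ∧ Um.By = 0 ∧ Um.h + Um.b = C)
    (hi : Ui.vx = 0 ∧ Ui.vy = 0 ∧ Ui.Bx = 0 ∧ Ui.By = 0 ∧ Ui.h + Ui.b = C)
    (hp : Up.vx = 0 ∧ Up.vy = 0 ∧ Up.Bx = 0 ∧ Up.By = 0 ∧ Up.h + Up.b = C) :
    (fun k => ecFlux g Ui Up k - ecFlux g Um Ui k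
      + PsiVec Ui k * (amean (fun U => U.h * U.Bx) Ui Up - amean (fun U => U.h * U.Bx) Um Ui)
      + G1Vec g Ui k * (amean (fun U => U.b) Ui Up - amean (fun U => U.b) Um Ui))
      = (0 : Fin 5 → ℝ) := by
  obtain ⟨hvxm, -, hBxm, -, hCm⟩ := hm
  obtain ⟨hvxi, -, hBxi, -, hCi⟩ := hi
  obtain ⟨hvxp, -, hBxp, -, hCp⟩ := hp
  apply well_balanced_lake_at_rest_general g <;> simp [amean, ajump, surfaceLevel, *]
end
end

section
/- (Strict convexity of the entropy function.) Fix real numbers g > 0 and b. The entropy function in the conservative variables, η(h, m₁, m₂, n₁, n₂) := (m₁² + m₂² + n₁² + n₂²)/(2h) + g·h²/2 + g·h·b, is strictly convex on the open convex set { (h, m₁, m₂, n₁, n₂) ∈ ℝ⁵ : h > 0 }. -/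
/-!
The kinetic and magnetic part `‖m‖² / (2h)` of the entropy is the perspective `h f(m / h)` of
`f v = ‖v‖² / 2`. The velocity of a convex combination of two states `(h, m)` and `(k, n)` with
weights `a` and `b` is the convex combination of their velocities `m / h` and `n / k` with weights
proportional to `a h` and `b k`. Jensen's inequality for `f` therefore makes the perspective
convex, strictly so between states of distinct velocities. Distinct states of equal velocity have
distinct heights, and there the strictly convex potential energy `g h² / 2 + g h b` takes over.
-/

open Set

section LinearMap

variable {𝕜 E F β : Type*} [Semiring 𝕜] [PartialOrder 𝕜] [AddCommMonoid E] [Module 𝕜 E]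
  [AddCommMonoid F] [Module 𝕜 F] [AddCommMonoid β] [PartialOrder β] [SMul 𝕜 β]

theorem strictConvexOn_comp_linearMap {f : F → β} {s : Set F} (hf : StrictConvexOn 𝕜 s f)
    (g : E →ₗ[𝕜] F) (hg : Function.Injective g) : StrictConvexOn 𝕜 (g ⁻¹' s) (f ∘ g) := by
  refine ⟨hf.1.linear_preimage g, fun x hx y hy hxy a b ha hb hab ↦ ?_⟩
  simpa only [Function.comp_apply, map_add, map_smul] using hf.2 hx hy (hg.ne hxy) ha hb hab

end LinearMap

section Perspective

variable {𝕜 E β : Type*} [Field 𝕜] [AddCommGroup E] [Module 𝕜 E]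

/-- The perspective `(h, m) ↦ h f(m / h)` of a function `f`. Where `h = 0`, the
convention `0⁻¹ = 0` only produces junk; the theory takes place on `perspectiveDomain`. -/
def perspective [SMul 𝕜 β] (f : E → β) (p : 𝕜 × E) : β :=
  p.1 • f (p.1⁻¹ • p.2)

variable (𝕜) in
/-- The cone `{(h, m) | 0 < h ∧ m / h ∈ s}` over a set `s`: the natural domain of the perspective
of a function on `s`. -/
def perspectiveDomain [LT 𝕜] (s : Set E) : Set (𝕜 × E) :=
  {p | 0 < p.1 ∧ p.1⁻¹ • p.2 ∈ s}

theorem inv_smul_combo {h k : 𝕜} (hh : h ≠ 0) (hk : k ≠ 0) (a b : 𝕜) (x y : E) :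
    (a * h + b * k)⁻¹ • (a • x + b • y) =
      (a * h / (a * h + b * k)) • h⁻¹ • x + (b * k / (a * h + b * k)) • k⁻¹ • y := by
  simp only [smul_add, smul_smul]
  congr 2 <;> field_simp

theorem perspective_combo [SMul 𝕜 β] (f : E → β) {p q : 𝕜 × E} (hp : p.1 ≠ 0) (hq : q.1 ≠ 0)
    (a b : 𝕜) :
    perspective f (a • p + b • q) = (a * p.1 + b * q.1) •
      f ((a * p.1 / (a * p.1 + b * q.1)) • p.1⁻¹ • p.2 +
        (b * q.1 / (a * p.1 + b * q.1)) • q.1⁻¹ • q.2) := by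
  rw [← inv_smul_combo hp hq]
  rfl

theorem combo_perspective [AddCommMonoid β] [Module 𝕜 β] (f : E → β) (p q : 𝕜 × E) {a b : 𝕜}
    (hH : a * p.1 + b * q.1 ≠ 0) :
    a • perspective f p + b • perspective f q = (a * p.1 + b * q.1) •
      ((a * p.1 / (a * p.1 + b * q.1)) • f (p.1⁻¹ • p.2) +
        (b * q.1 / (a * p.1 + b * q.1)) • f (q.1⁻¹ • q.2)) := by
  simp only [perspective, smul_add, smul_smul, mul_div_cancel₀ _ hH]

variable [LinearOrder 𝕜] [IsStrictOrderedRing 𝕜] {s : Set E}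

theorem convex_perspectiveDomain (hs : Convex 𝕜 s) : Convex 𝕜 (perspectiveDomain 𝕜 s) := by
  rintro p ⟨hp, hps⟩ q ⟨hq, hqs⟩ a b ha hb hab
  have hH : 0 < a * p.1 + b * q.1 := convex_Ioi (0 : 𝕜) hp hq ha hb hab
  refine ⟨hH, ?_⟩
  have hv := inv_smul_combo hp.ne' hq.ne' a b p.2 q.2
  refine hv ▸ hs hps hqs (by positivity) (by positivity) ?_
  rw [← add_div, div_self hH.ne']

variable [AddCommMonoid β] [PartialOrder β] [Module 𝕜 β] {f : E → β}

theorem convexOn_perspective [PosSMulMono 𝕜 β] (hf : ConvexOn 𝕜 s f) :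
    ConvexOn 𝕜 (perspectiveDomain 𝕜 s) (perspective f) := by
  refine ⟨convex_perspectiveDomain hf.1, ?_⟩
  rintro p ⟨hp, hps⟩ q ⟨hq, hqs⟩ a b ha hb hab
  have hH : 0 < a * p.1 + b * q.1 := convex_Ioi (0 : 𝕜) hp hq ha hb hab
  rw [perspective_combo f hp.ne' hq.ne', combo_perspective f p q hH.ne']
  refine smul_le_smul_of_nonneg_left (hf.2 hps hqs (by positivity) (by positivity) ?_) hH.le
  rw [← add_div, div_self hH.ne']

theorem perspective_combo_lt [PosSMulStrictMono 𝕜 β] (hf : StrictConvexOn 𝕜 s f) {p q : 𝕜 × E}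
    (hp : p ∈ perspectiveDomain 𝕜 s) (hq : q ∈ perspectiveDomain 𝕜 s)
    (hpq : p.1⁻¹ • p.2 ≠ q.1⁻¹ • q.2) {a b : 𝕜} (ha : 0 < a) (hb : 0 < b) :
    perspective f (a • p + b • q) < a • perspective f p + b • perspective f q := by
  obtain ⟨hp, hps⟩ := hp
  obtain ⟨hq, hqs⟩ := hq
  have hH : 0 < a * p.1 + b * q.1 := by positivity
  rw [perspective_combo f hp.ne' hq.ne', combo_perspective f p q hH.ne']
  refine smul_lt_smul_of_pos_left (hf.2 hps hqs hpq (by positivity) (by positivity) ?_) hH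
  rw [← add_div, div_self hH.ne']

theorem strictConvexOn_perspective_add [IsOrderedCancelAddMonoid β] [PosSMulStrictMono 𝕜 β]
    {t : Set 𝕜} {φ : 𝕜 → β} (hf : StrictConvexOn 𝕜 s f) (hφ : StrictConvexOn 𝕜 t φ) :
    StrictConvexOn 𝕜 (perspectiveDomain 𝕜 s ∩ Prod.fst ⁻¹' t)
      (fun p ↦ perspective f p + φ p.1) := by
  have hpersp := convexOn_perspective hf.convexOn
  refine ⟨hpersp.1.inter (hφ.1.linear_preimage (LinearMap.fst 𝕜 𝕜 E)), ?_⟩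
  rintro p ⟨hp, hpt⟩ q ⟨hq, hqt⟩ hpq a b ha hb hab
  rw [smul_add, smul_add, add_add_add_comm]
  by_cases hv : p.1⁻¹ • p.2 = q.1⁻¹ • q.2
  · have hne : p.1 ≠ q.1 := fun h ↦
      hpq (Prod.ext h (smul_right_injective E (inv_ne_zero hq.1.ne') (h ▸ hv)))
    exact add_lt_add_of_le_of_lt (hpersp.2 hp hq ha.le hb.le hab) (hφ.2 hpt hqt hne ha hb hab)
  · exact add_lt_add_of_lt_of_le (perspective_combo_lt hf hp hq hv ha hb)
      (hφ.convexOn.2 hpt hqt ha.le hb.le hab)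

end Perspective

theorem strictConvexOn_quadratic {𝕜 : Type*} [Field 𝕜] [LinearOrder 𝕜] [IsStrictOrderedRing 𝕜]
    {c : 𝕜} (hc : 0 < c) (d : 𝕜) : StrictConvexOn 𝕜 univ fun x : 𝕜 ↦ c * x ^ 2 + d * x := by
  refine ⟨convex_univ, fun x _ y _ hxy a b ha hb hab ↦ ?_⟩
  have hgap : 0 < c * (a * b * (x - y) ^ 2) := by
    have := sub_ne_zero.mpr hxy
    positivity
  obtain rfl : b = 1 - a := eq_sub_of_add_eq' hab
  simp only [smul_eq_mul]
  linarith

theorem perspective_norm_sq_div_two {E : Type*} [SeminormedAddCommGroup E] [NormedSpace ℝ E]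
    {p : ℝ × E} (hp : p.1 ≠ 0) :
    perspective (fun v : E ↦ ‖v‖ ^ 2 / 2) p = ‖p.2‖ ^ 2 / (2 * p.1) := by
  rw [perspective, norm_smul, mul_pow, norm_inv, inv_pow, Real.norm_eq_abs, sq_abs, smul_eq_mul]
  field_simp

section Entropy

variable {E : Type*} [NormedAddCommGroup E] [InnerProductSpace ℝ E]

theorem strictConvexOn_norm_sq_div_two : StrictConvexOn ℝ univ fun v : E ↦ ‖v‖ ^ 2 / 2 := by
  have h : StrongConvexOn univ 1 fun v : E ↦ ‖v‖ ^ 2 / 2 := by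
    rw [strongConvexOn_iff_convex]
    refine (convexOn_const (0 : ℝ) convex_univ).congr fun v _ ↦ ?_
    ring
  exact h.strictConvexOn one_pos

theorem entropy_strictConvexOn_general {φ : ℝ → ℝ} (hφ : StrictConvexOn ℝ (Ioi 0) φ) :
    StrictConvexOn ℝ {p : ℝ × E | 0 < p.1} (fun p ↦ ‖p.2‖ ^ 2 / (2 * p.1) + φ p.1) := by
  have h := strictConvexOn_perspective_add (strictConvexOn_norm_sq_div_two (E := E)) hφ
  have hdom : perspectiveDomain ℝ (univ : Set E) ∩ Prod.fst ⁻¹' Ioi 0 = {p | 0 < p.1} := by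
    ext p
    simp [perspectiveDomain]
  rw [hdom] at h
  exact h.congr fun p (hp : 0 < p.1) ↦ by simp only [perspective_norm_sq_div_two hp.ne']

theorem strictConvexOn_potentialEnergy {g : ℝ} (hg : 0 < g) (b : ℝ) :
    StrictConvexOn ℝ univ fun h : ℝ ↦ g * h ^ 2 / 2 + g * h * b :=
  (strictConvexOn_quadratic (half_pos hg) (g * b)).congr fun h _ ↦ by ring

/-- The splitting `(h, m) : ℝ × ℝⁿ` of a coordinate vector `(h, m₁, …, mₙ)`, with the Euclidean
norm on the second factor. -/
noncomputable def splitHeight (n : ℕ) : (Fin (n + 1) → ℝ) ≃ₗ[ℝ] ℝ × EuclideanSpace ℝ (Fin n) :=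
  (Fin.consLinearEquiv ℝ fun _ ↦ ℝ).symm ≪≫ₗ
    (LinearEquiv.refl ℝ ℝ).prodCongr (WithLp.linearEquiv 2 ℝ (Fin n → ℝ)).symm

theorem splitHeight_fst {n : ℕ} (p : Fin (n + 1) → ℝ) : (splitHeight n p).1 = p 0 :=
  rfl

theorem norm_sq_splitHeight_snd {n : ℕ} (p : Fin (n + 1) → ℝ) :
    ‖(splitHeight n p).2‖ ^ 2 = ∑ i : Fin n, p i.succ ^ 2 :=
  EuclideanSpace.real_norm_sq_eq _

end Entropy

/-- strict convexity of the entropy function.  For `g > 0` and a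
fixed bottom value `b`, the entropy in the conservative variables
`η(h, m₁, m₂, n₁, n₂) = (m₁² + m₂² + n₁² + n₂²)/(2h) + g h²/2 + g h b`
is strictly convex on the open convex set `{h > 0}` of `ℝ⁵`. -/
theorem entropy_strictConvexOn (g b : ℝ) (hg : 0 < g) :
    StrictConvexOn ℝ {p : Fin 5 → ℝ | 0 < p 0}
      (fun p => (p 1 ^ 2 + p 2 ^ 2 + p 3 ^ 2 + p 4 ^ 2) / (2 * p 0)
        + g * p 0 ^ 2 / 2 + g * p 0 * b) := by
  have hφ := (strictConvexOn_potentialEnergy hg b).subset (subset_univ _) (convex_Ioi 0)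
  simpa [Function.comp_def, splitHeight_fst, norm_sq_splitHeight_snd, Fin.sum_univ_four, add_assoc]
    using strictConvexOn_comp_linearMap (entropy_strictConvexOn_general hφ)
      (splitHeight 4).toLinearMap (splitHeight 4).injective
end

section
/- (Positivity preservation of the local Lax–Friedrichs scheme.) Let g > 0, let (h_i, vx_i, Bx_i)_{i∈ℤ} be grid values with h_i > 0 for all i, and suppose M is a real number with |vx_i| + √(g·h_i + Bx_i²) ≤ M for all i. Define α_{i+1/2} := max(|vx_i| + √(g·h_i + Bx_i²), |vx_{i+1}| + √(g·h_{i+1} + Bx_{i+1}²)) and the Lax–Friedrichs mass flux f_{i+1/2} := ½(h_i·vx_i + h_{i+1}·vx_{i+1}) − ½·α_{i+1/2}·(h_{i+1} − h_i). If λ > 0 satisfies λ·M ≤ ½, then the forward-Euler update h_i^{new} := h_i − λ·(f_{i+1/2} − f_{i−1/2}) satisfies h_i^{new} > 0 for all i. -/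
noncomputable section

/-- The local Lax–Friedrichs viscosity `α_{i+1/2}`. -/
def alphaLF (g : ℝ) (h vx Bx : ℤ → ℝ) (i : ℤ) : ℝ :=
  max (|vx i| + Real.sqrt (g * h i + Bx i ^ 2))
      (|vx (i + 1)| + Real.sqrt (g * h (i + 1) + Bx (i + 1) ^ 2))

/-- The Lax–Friedrichs mass flux `f_{i+1/2}`. -/
def massFluxLF (g : ℝ) (h vx Bx : ℤ → ℝ) (i : ℤ) : ℝ :=
  (h i * vx i + h (i + 1) * vx (i + 1)) / 2
    - alphaLF g h vx Bx i * (h (i + 1) - h i) / 2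

section ViscousFlux

/-- The central mass flux at `i + 1/2` for heights `h` and velocities `v`, stabilised by an
arbitrary numerical viscosity `a`; as with `alphaLF`, the interface `i + 1/2` carries the
index `i`. -/
def viscousMassFlux {K : Type*} [Field K] (a h v : ℤ → K) (i : ℤ) : K :=
  (h i * v i + h (i + 1) * v (i + 1)) / 2 - a i * (h (i + 1) - h i) / 2

/-- The new height is a linear combination of the old heights in three adjacent cells, so its sign
can be read off the coefficients: the viscosity controls the outer two, the CFL condition the
middle one. -/
theorem sub_mul_viscousMassFlux_sub {K : Type*} [Field K] (a h v : ℤ → K) (lam : K) (i : ℤ) :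
    h i - lam * (viscousMassFlux a h v i - viscousMassFlux a h v (i - 1)) =
      (1 - lam * (a (i - 1) + a i) / 2) * h i
        + lam * (a (i - 1) + v (i - 1)) / 2 * h (i - 1)
        + lam * (a i - v (i + 1)) / 2 * h (i + 1) := by
  simp only [viscousMassFlux, sub_add_cancel]
  ring

theorem sub_mul_viscousMassFlux_sub_pos {K : Type*} [Field K] [LinearOrder K]
    [IsStrictOrderedRing K] {a h v : ℤ → K} {lam : K} {i : ℤ} (hlam : 0 ≤ lam)
    (h_mid : 0 < h i) (h_left : 0 ≤ h (i - 1)) (h_right : 0 ≤ h (i + 1))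
    (ha_left : -v (i - 1) ≤ a (i - 1)) (ha_right : v (i + 1) ≤ a i)
    (hcfl : lam * (a (i - 1) + a i) < 2) :
    0 < h i - lam * (viscousMassFlux a h v i - viscousMassFlux a h v (i - 1)) := by
  have coeff_mid : 0 < 1 - lam * (a (i - 1) + a i) / 2 := by linarith
  have coeff_left : 0 ≤ lam * (a (i - 1) + v (i - 1)) / 2 :=
    div_nonneg (mul_nonneg hlam (neg_le_iff_add_nonneg.mp ha_left)) zero_le_two
  have coeff_right : 0 ≤ lam * (a i - v (i + 1)) / 2 :=
    div_nonneg (mul_nonneg hlam (sub_nonneg.mpr ha_right)) zero_le_two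
  rw [sub_mul_viscousMassFlux_sub]
  exact add_pos_of_pos_of_nonneg
    (add_pos_of_pos_of_nonneg (mul_pos coeff_mid h_mid) (mul_nonneg coeff_left h_left))
    (mul_nonneg coeff_right h_right)

end ViscousFlux

section LaxFriedrichs

variable {g : ℝ} {h vx Bx : ℤ → ℝ}

theorem massFluxLF_eq_viscousMassFlux :
    massFluxLF g h vx Bx = viscousMassFlux (alphaLF g h vx Bx) h vx :=
  rfl

theorem abs_left_le_alphaLF (i : ℤ) : |vx i| ≤ alphaLF g h vx Bx i :=
  le_max_of_le_left (le_add_of_nonneg_right (Real.sqrt_nonneg _))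

theorem abs_right_le_alphaLF (i : ℤ) : |vx (i + 1)| ≤ alphaLF g h vx Bx i :=
  le_max_of_le_right (le_add_of_nonneg_right (Real.sqrt_nonneg _))

theorem alphaLF_le {M : ℝ} {i : ℤ} (h_left : |vx i| + √(g * h i + Bx i ^ 2) ≤ M)
    (h_right : |vx (i + 1)| + √(g * h (i + 1) + Bx (i + 1) ^ 2) ≤ M) :
    alphaLF g h vx Bx i ≤ M :=
  max_le h_left h_right

theorem laxFriedrichs_positivity_general {lam : ℝ} {i : ℤ} (hlam : 0 ≤ lam)
    (h_mid : 0 < h i) (h_left : 0 ≤ h (i - 1)) (h_right : 0 ≤ h (i + 1))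
    (hcfl : lam * (alphaLF g h vx Bx (i - 1) + alphaLF g h vx Bx i) < 2) :
    0 < h i - lam * (massFluxLF g h vx Bx i - massFluxLF g h vx Bx (i - 1)) := by
  rw [massFluxLF_eq_viscousMassFlux]
  exact sub_mul_viscousMassFlux_sub_pos hlam h_mid h_left h_right
    ((neg_le_abs _).trans (abs_left_le_alphaLF _))
    ((le_abs_self _).trans (abs_right_le_alphaLF _)) hcfl

end LaxFriedrichs

/-- positivity preservation of the local Lax–Friedrichs scheme.
Under the CFL condition `λ·M ≤ ½`, the forward-Euler update of the water height
with the local Lax–Friedrichs mass flux remains positive. -/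
theorem laxFriedrichs_positivity (g : ℝ) (hg : 0 < g)
    (h vx Bx : ℤ → ℝ) (hpos : ∀ i, 0 < h i)
    (M : ℝ) (hM : ∀ i, |vx i| + Real.sqrt (g * h i + Bx i ^ 2) ≤ M)
    (lam : ℝ) (hlam : 0 < lam) (hcfl : lam * M ≤ 1 / 2) :
    ∀ i : ℤ, 0 < h i - lam * (massFluxLF g h vx Bx i - massFluxLF g h vx Bx (i - 1)) := by
  intro i
  have hα (j : ℤ) : lam * alphaLF g h vx Bx j ≤ 1 / 2 :=
    (mul_le_mul_of_nonneg_left (alphaLF_le (hM j) (hM (j + 1))) hlam.le).trans hcfl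
  exact laxFriedrichs_positivity_general hlam.le (hpos i) (hpos _).le (hpos _).le
    (by linarith [hα (i - 1), hα i])
end
end

section
/- (The Lax–Friedrichs flux is entropy stable for flat bottom.) Let g > 0 and let L, R be two states with h_L > 0, h_R > 0 and zero bottom values b_L = b_R = 0. Suppose α ≥ max(|vx_L| + √(g·h_L + Bx_L²), |vx_R| + √(g·h_R + Bx_R²)). Then the Lax–Friedrichs flux F̂ᴸᶠ := ⟨F₁⟩ − (α/2)·[U], where [U] = ([h], [h·vx], [h·vy], [h·Bx], [h·By]) is the jump of the conservative variables, satisfies the entropy stability inequality [V]·F̂ᴸᶠ − [ψ₁] + [Φ]⟨hBx⟩ ≤ 0. -/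
open scoped BigOperators
noncomputable section
open Matrix

open SWMHD

/-!
The Lax–Friedrichs flux is the central flux `⟨F₁⟩` minus the dissipation `(α/2)[U]`. Against the
entropy variables the dissipation yields the definite form `g [h]² + ⟨h⟩ (|[v]|² + |[B]|²)`, while
the central flux yields `(g/4) [h]² [vx] + (1/4) [h vx] (|[v]|² + |[B]|²) - (1/2) [h Bx] [v]·[B]`.
By Young's inequality `|[v]·[B]| ≤ (|[v]|² + |[B]|²) / 2`, so the former absorbs the latter as soon
as `[vx] ≤ 2α` and `[h vx] + |[h Bx]| ≤ 2α⟨h⟩`. Both follow from the one-sided Alfvén speed bounds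
`-vx_L + |Bx_L| ≤ α` and `vx_R + |Bx_R| ≤ α`, as `√(g h + Bx²)` dominates `|Bx|`.
-/

namespace SWMHD

lemma abs_le_sqrt_add_sq {c : ℝ} (hc : 0 ≤ c) (x : ℝ) : |x| ≤ √(c + x ^ 2) :=
  Real.abs_le_sqrt (le_add_of_nonneg_left hc)

/-- The left-hand side `[V]·F - [ψ₁] + [Φ]⟨hBx⟩` of the discrete entropy inequality over a flat
bottom. The bottom terms of `ecCondition` are left out: they cancel when `b_L = b_R`. -/
def entropyProduction (g : ℝ) (F : Fin 5 → ℝ) (L R : SWState) : ℝ :=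
  vjump g L R ⬝ᵥ F - ajump (psi1 g) L R + ajump Phi L R * amean (fun U => U.h * U.Bx) L R

/-- The central two-point flux `⟨F₁⟩`. -/
def centralFlux (g : ℝ) (L R : SWState) : Fin 5 → ℝ :=
  fun k => (physFlux g L k + physFlux g R k) / 2

/-- The jump `[U]` of the conservative variables. -/
def consJump (L R : SWState) : Fin 5 → ℝ :=
  fun k => consVar R k - consVar L k

/-- The Lax–Friedrichs flux `⟨F₁⟩ - (α/2)[U]` with dissipation speed `α`. -/
def laxFriedrichsFlux (g α : ℝ) (L R : SWState) : Fin 5 → ℝ :=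
  centralFlux g L R - (α / 2) • consJump L R

/-- The squared size `|[v]|² + |[B]|²` of the velocity and magnetic jumps, without the factor `1/2`
of a kinetic energy. -/
def jumpEnergy (L R : SWState) : ℝ :=
  ajump SWState.vx L R ^ 2 + ajump SWState.vy L R ^ 2
    + ajump SWState.Bx L R ^ 2 + ajump SWState.By L R ^ 2

/-- The cross helicity `[v]·[B]` of the velocity and magnetic jumps. -/
def jumpCrossHelicity (L R : SWState) : ℝ :=
  ajump SWState.vx L R * ajump SWState.Bx L R + ajump SWState.vy L R * ajump SWState.By L R

lemma abs_jumpCrossHelicity_le (L R : SWState) : |jumpCrossHelicity L R| ≤ jumpEnergy L R / 2 := by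
  -- `|[v]|² + |[B]|² ± 2 [v]·[B] = |[v ± B]|²`, the jumps of the Elsasser variables.
  unfold jumpCrossHelicity jumpEnergy
  rw [abs_le]
  constructor
  · linarith [sq_nonneg (ajump SWState.vx L R + ajump SWState.Bx L R),
      sq_nonneg (ajump SWState.vy L R + ajump SWState.By L R)]
  · linarith [sq_nonneg (ajump SWState.vx L R - ajump SWState.Bx L R),
      sq_nonneg (ajump SWState.vy L R - ajump SWState.By L R)]

lemma entropyProduction_sub_smul (g c : ℝ) (F D : Fin 5 → ℝ) (L R : SWState) :
    entropyProduction g (F - c • D) L R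
      = entropyProduction g F L R - c * (vjump g L R ⬝ᵥ D) := by
  simp only [entropyProduction, dotProduct_sub, dotProduct_smul, smul_eq_mul]
  ring

section FlatBottom

variable {L R : SWState}

lemma vjump_dotProduct_consJump (g : ℝ) (hb : L.b = R.b) :
    vjump g L R ⬝ᵥ consJump L R
      = g * ajump SWState.h L R ^ 2 + amean SWState.h L R * jumpEnergy L R := by
  simp only [dotProduct, Fin.sum_univ_five, cons_val_zero, cons_val_one, cons_val, vjump,
    entropyVars, consJump, consVar, jumpEnergy, ajump, amean, hb]
  ring

lemma entropyProduction_centralFlux (g : ℝ) (hb : L.b = R.b) :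
    entropyProduction g (centralFlux g L R) L R
      = g / 4 * ajump SWState.h L R ^ 2 * ajump SWState.vx L R
        + ajump (fun U => U.h * U.vx) L R * jumpEnergy L R / 4
        - ajump (fun U => U.h * U.Bx) L R * jumpCrossHelicity L R / 2 := by
  simp only [entropyProduction, dotProduct, Fin.sum_univ_five, cons_val_zero, cons_val_one,
    cons_val, vjump, entropyVars, centralFlux, physFlux, psi1, Phi, jumpEnergy,
    jumpCrossHelicity, ajump, amean, hb]
  ring

lemma entropyProduction_laxFriedrichsFlux (g α : ℝ) (hb : L.b = R.b) :
    entropyProduction g (laxFriedrichsFlux g α L R) L R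
      = -(g / 4 * ajump SWState.h L R ^ 2 * (2 * α - ajump SWState.vx L R)
        + (2 * α * amean SWState.h L R - ajump (fun U => U.h * U.vx) L R) * jumpEnergy L R / 4
        + ajump (fun U => U.h * U.Bx) L R * jumpCrossHelicity L R / 2) := by
  rw [laxFriedrichsFlux, entropyProduction_sub_smul, entropyProduction_centralFlux g hb,
    vjump_dotProduct_consJump g hb]
  ring

end FlatBottom

section SpeedBounds

variable {α : ℝ} {L R : SWState}

lemma ajump_vx_le_two_mul (hαL : |L.Bx| ≤ α + L.vx) (hαR : |R.Bx| ≤ α - R.vx) :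
    ajump SWState.vx L R ≤ 2 * α := by
  unfold ajump
  linarith [abs_nonneg L.Bx, abs_nonneg R.Bx]

lemma abs_ajump_h_mul_Bx_le (hL : 0 ≤ L.h) (hR : 0 ≤ R.h)
    (hαL : |L.Bx| ≤ α + L.vx) (hαR : |R.Bx| ≤ α - R.vx) :
    |ajump (fun U => U.h * U.Bx) L R|
      ≤ 2 * α * amean SWState.h L R - ajump (fun U => U.h * U.vx) L R :=
  calc |R.h * R.Bx - L.h * L.Bx|
      ≤ |R.h * R.Bx| + |L.h * L.Bx| := abs_sub _ _
    _ = R.h * |R.Bx| + L.h * |L.Bx| := by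
      rw [abs_mul, abs_mul, abs_of_nonneg hR, abs_of_nonneg hL]
    _ ≤ R.h * (α - R.vx) + L.h * (α + L.vx) := by gcongr
    _ = 2 * α * amean SWState.h L R - ajump (fun U => U.h * U.vx) L R := by
      unfold amean ajump
      ring

end SpeedBounds

end SWMHD

theorem laxFriedrichs_entropy_stable_general {g α : ℝ} {L R : SWState} (hg : 0 ≤ g)
    (hL : 0 ≤ L.h) (hR : 0 ≤ R.h) (hb : L.b = R.b)
    (hαL : |L.Bx| ≤ α + L.vx) (hαR : |R.Bx| ≤ α - R.vx) :
    entropyProduction g (laxFriedrichsFlux g α L R) L R ≤ 0 := by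
  rw [entropyProduction_laxFriedrichsFlux g α hb, neg_nonpos]
  set D := 2 * α * amean SWState.h L R - ajump (fun U => U.h * U.vx) L R
  set J := ajump (fun U => U.h * U.Bx) L R
  have height_nonneg : 0 ≤ g / 4 * ajump SWState.h L R ^ 2 * (2 * α - ajump SWState.vx L R) :=
    mul_nonneg (by positivity) (sub_nonneg.2 (ajump_vx_le_two_mul hαL hαR))
  have J_le : |J| ≤ D := abs_ajump_h_mul_Bx_le hL hR hαL hαR
  have cross_le : |J * jumpCrossHelicity L R| ≤ D * (jumpEnergy L R / 2) := by
    rw [abs_mul]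
    exact mul_le_mul J_le (abs_jumpCrossHelicity_le L R) (abs_nonneg _) ((abs_nonneg J).trans J_le)
  linarith [neg_le_of_abs_le cross_le]

/-- the Lax–Friedrichs flux is entropy stable for flat bottom:
`[V]·F̂ᴸᶠ − [ψ₁] + [Φ]⟨hBx⟩ ≤ 0`. -/
theorem laxFriedrichs_entropy_stable (g : ℝ) (hg : 0 < g)
    (L R : SWState) (hL : 0 < L.h) (hR : 0 < R.h)
    (hbL : L.b = 0) (hbR : R.b = 0) (α : ℝ)
    (hα : max (|L.vx| + Real.sqrt (g * L.h + L.Bx ^ 2))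
              (|R.vx| + Real.sqrt (g * R.h + R.Bx ^ 2)) ≤ α) :
    vjump g L R ⬝ᵥ
        (fun k => (physFlux g L k + physFlux g R k) / 2 - α / 2 * (consVar R k - consVar L k))
      - ajump (psi1 g) L R
      + ajump Phi L R * amean (fun U => U.h * U.Bx) L R ≤ 0 := by
  obtain ⟨hαL, hαR⟩ := max_le_iff.1 hα
  exact laxFriedrichs_entropy_stable_general hg.le hL.le hR.le (hbL.trans hbR.symm)
    (by linarith [abs_le_sqrt_add_sq (mul_pos hg hL).le L.Bx, neg_abs_le L.vx])
    (by linarith [abs_le_sqrt_add_sq (mul_pos hg hR).le R.Bx, le_abs_self R.vx])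
end
end

section
/- (Entropy identity for smooth solutions of the modified 1D SWMHD system.) Let g be real and let h, vx, vy, Bx, By : ℝ × ℝ → ℝ be continuously differentiable functions of (x,t) with h > 0 everywhere, and b : ℝ → ℝ continuously differentiable. Suppose the modified 1D SWMHD equations with the Janhunen source term hold pointwise: ∂ₜh + ∂ₓ(h·vx) = 0; ∂ₜ(h·vx) + ∂ₓ(h·vx² − h·Bx² + ½g·h²) = −g·h·b′(x); ∂ₜ(h·vy) + ∂ₓ(h·vx·vy − h·Bx·By) = 0; ∂ₜ(h·Bx) = −vx·∂ₓ(h·Bx); ∂ₜ(h·By) + ∂ₓ(h·(vx·By − Bx·vy)) = −vy·∂ₓ(h·Bx). Then the entropy identity ∂ₜη + ∂ₓq₁ = 0 holds pointwise, where η := ½h(vx²+vy²+Bx²+By²) + ½g·h² + g·h·b and q₁ := (½(vx²+vy²+Bx²+By²) + g·h + g·b)·h·vx − h·Bx·(vx·Bx + vy·By). -/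
noncomputable section

/-- Partial derivative with respect to the first (space) variable. -/
def px (f : ℝ → ℝ → ℝ) (x t : ℝ) : ℝ := deriv (fun x' => f x' t) x

/-- Partial derivative with respect to the second (time) variable. -/
def pt (f : ℝ → ℝ → ℝ) (x t : ℝ) : ℝ := deriv (fun t' => f x t') t

/-!
Put `m = h·vx` and `n = h·Bx`. The flux `m·Bx − n·vx` vanishes identically, so both pairs
`(v, B) = (vx, Bx)` and `(vy, By)` obey the same equations
`∂ₜ(h·v) + ∂ₓ(m·v − n·B) = S` and `∂ₜ(h·B) + ∂ₓ(m·B − n·v) = −v·∂ₓn`.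
Testing them with `v` and `B` and the mass equation with `−(v² + B²)/2` gives the balance
`∂ₜ(h·(v² + B²)/2) + ∂ₓ(m·(v² + B²)/2 − n·v·B) = v·S`; the Janhunen term `−v·∂ₓn` supplies
exactly what the product rule for `n·v·B` lacks. In the sum over both pairs the only work left is
`−g·m·∂ₓ(h + b)`, which the balance of potential energy cancels.
-/

theorem differentiableAt_slices_of_uncurry {𝕜 E F G : Type*} [NontriviallyNormedField 𝕜]
    [NormedAddCommGroup E] [NormedSpace 𝕜 E] [NormedAddCommGroup F] [NormedSpace 𝕜 F]
    [NormedAddCommGroup G] [NormedSpace 𝕜 G] {f : E → F → G} {x : E} {y : F}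
    (hf : DifferentiableAt 𝕜 (Function.uncurry f) (x, y)) :
    DifferentiableAt 𝕜 (fun x' => f x' y) x ∧ DifferentiableAt 𝕜 (fun y' => f x y') y :=
  ⟨DifferentiableAt.comp (f := fun x' => (x', y)) x hf (by fun_prop),
    DifferentiableAt.comp (f := fun y' => (x, y')) y hf (by fun_prop)⟩

theorem deriv_fun_mul_mul_eq {𝕜 𝔸 : Type*} [NontriviallyNormedField 𝕜]
    [NormedCommRing 𝔸] [NormedAlgebra 𝕜 𝔸] {w u v : 𝕜 → 𝔸} {x : 𝕜}
    (hw : DifferentiableAt 𝕜 w x) (hu : DifferentiableAt 𝕜 u x) (hv : DifferentiableAt 𝕜 v x) :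
    deriv (fun y => w y * u y * v y) x
      = u x * deriv (fun y => w y * v y) x + v x * deriv (fun y => w y * u y) x
        - u x * v x * deriv w x := by
  rw [deriv_fun_mul (hw.fun_mul hu) hv, deriv_fun_mul hw hu, deriv_fun_mul hw hv]
  ring

theorem deriv_mul_sq_add_sq_div_two {𝕜 : Type*} [NontriviallyNormedField 𝕜]
    [NeZero (2 : 𝕜)] {w u v : 𝕜 → 𝕜} {x : 𝕜}
    (hw : DifferentiableAt 𝕜 w x) (hu : DifferentiableAt 𝕜 u x) (hv : DifferentiableAt 𝕜 v x) :
    deriv (fun y => w y * (u y ^ 2 + v y ^ 2) / 2) x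
      = u x * deriv (fun y => w y * u y) x + v x * deriv (fun y => w y * v y) x
        - (u x ^ 2 + v x ^ 2) / 2 * deriv w x := by
  have expand : (fun y => w y * (u y ^ 2 + v y ^ 2) / 2)
      = fun y => (w y * u y * u y + w y * v y * v y) / 2 := by
    funext y; ring
  rw [expand, deriv_div_const, deriv_fun_add (by fun_prop) (by fun_prop),
    deriv_fun_mul_mul_eq hw hu hu, deriv_fun_mul_mul_eq hw hv hv]
  field_simp
  ring

section Balance

variable {h m n v B : ℝ → ℝ → ℝ} {x t : ℝ}

theorem kinetic_magnetic_energy_balance {S : ℝ}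
    (hh : DifferentiableAt ℝ (fun t' => h x t') t)
    (hm : DifferentiableAt ℝ (fun x' => m x' t) x) (hn : DifferentiableAt ℝ (fun x' => n x' t) x)
    (hv : DifferentiableAt ℝ (Function.uncurry v) (x, t))
    (hB : DifferentiableAt ℝ (Function.uncurry B) (x, t))
    (mass_eq : pt h x t + px m x t = 0)
    (momentum_eq : pt (fun x t => h x t * v x t) x t
      + px (fun x t => m x t * v x t - n x t * B x t) x t = S)
    (induction_eq : pt (fun x t => h x t * B x t) x t
      + px (fun x t => m x t * B x t - n x t * v x t) x t = -(v x t * px n x t)) :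
    pt (fun x t => h x t * (v x t ^ 2 + B x t ^ 2) / 2) x t
      + px (fun x t => m x t * (v x t ^ 2 + B x t ^ 2) / 2 - n x t * v x t * B x t) x t
      = v x t * S := by
  obtain ⟨hv_x, hv_t⟩ := differentiableAt_slices_of_uncurry hv
  obtain ⟨hB_x, hB_t⟩ := differentiableAt_slices_of_uncurry hB
  simp only [px, pt] at mass_eq momentum_eq induction_eq ⊢
  rw [deriv_fun_sub (by fun_prop) (by fun_prop)] at momentum_eq induction_eq ⊢
  rw [deriv_mul_sq_add_sq_div_two hh hv_t hB_t, deriv_mul_sq_add_sq_div_two hm hv_x hB_x,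
    deriv_fun_mul_mul_eq hn hv_x hB_x]
  linear_combination v x t * momentum_eq + B x t * induction_eq
    - (v x t ^ 2 + B x t ^ 2) / 2 * mass_eq

theorem potential_energy_balance {b : ℝ → ℝ} (g : ℝ)
    (hh : DifferentiableAt ℝ (Function.uncurry h) (x, t))
    (hm : DifferentiableAt ℝ (fun x' => m x' t) x) (hb : DifferentiableAt ℝ b x)
    (mass_eq : pt h x t + px m x t = 0) :
    pt (fun x t => g * h x t ^ 2 / 2 + g * h x t * b x) x t
      + px (fun x t => g * (h x t + b x) * m x t) x t
      = g * m x t * (px h x t + deriv b x) := by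
  obtain ⟨hh_x, hh_t⟩ := differentiableAt_slices_of_uncurry hh
  have energy_rate : pt (fun x t => g * h x t ^ 2 / 2 + g * h x t * b x) x t
      = g * (h x t + b x) * pt h x t := by
    refine HasDerivAt.deriv ?_
    convert (((hh_t.hasDerivAt.fun_pow 2).const_mul g).div_const 2).fun_add
      ((hh_t.hasDerivAt.const_mul g).mul_const (b x)) using 1
    simp only [pt]
    ring
  have flux_gradient : px (fun x t => g * (h x t + b x) * m x t) x t
      = g * (px h x t + deriv b x) * m x t + g * (h x t + b x) * px m x t :=
    (((hh_x.hasDerivAt.fun_add hb.hasDerivAt).const_mul g).fun_mul hm.hasDerivAt).deriv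
  rw [energy_rate, flux_gradient]
  linear_combination g * (h x t + b x) * mass_eq

theorem px_add_hydrostatic_pressure {f : ℝ → ℝ → ℝ} (g : ℝ)
    (hf : DifferentiableAt ℝ (fun x' => f x' t) x) (hh : DifferentiableAt ℝ (fun x' => h x' t) x) :
    px (fun x t => f x t + g * h x t ^ 2 / 2) x t = px f x t + g * h x t * px h x t := by
  refine HasDerivAt.deriv ?_
  convert hf.hasDerivAt.fun_add (((hh.hasDerivAt.fun_pow 2).const_mul g).div_const 2) using 1
  simp only [px]
  ring

theorem balance_add {η₁ η₂ q₁ q₂ : ℝ → ℝ → ℝ} {s₁ s₂ : ℝ}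
    (balance₁ : pt η₁ x t + px q₁ x t = s₁) (balance₂ : pt η₂ x t + px q₂ x t = s₂)
    (hη₁ : DifferentiableAt ℝ (fun t' => η₁ x t') t := by fun_prop)
    (hη₂ : DifferentiableAt ℝ (fun t' => η₂ x t') t := by fun_prop)
    (hq₁ : DifferentiableAt ℝ (fun x' => q₁ x' t) x := by fun_prop)
    (hq₂ : DifferentiableAt ℝ (fun x' => q₂ x' t) x := by fun_prop) :
    pt (fun x t => η₁ x t + η₂ x t) x t + px (fun x t => q₁ x t + q₂ x t) x t = s₁ + s₂ := by
  simp only [px, pt] at balance₁ balance₂ ⊢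
  rw [deriv_fun_add hη₁ hη₂, deriv_fun_add hq₁ hq₂]
  linear_combination balance₁ + balance₂

end Balance

theorem smooth_entropy_identity_general (g : ℝ)
    {h vx vy Bx By : ℝ → ℝ → ℝ} {b : ℝ → ℝ} {x t : ℝ}
    (hh : DifferentiableAt ℝ (Function.uncurry h) (x, t))
    (hvx : DifferentiableAt ℝ (Function.uncurry vx) (x, t))
    (hvy : DifferentiableAt ℝ (Function.uncurry vy) (x, t))
    (hBx : DifferentiableAt ℝ (Function.uncurry Bx) (x, t))
    (hBy : DifferentiableAt ℝ (Function.uncurry By) (x, t))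
    (hb : DifferentiableAt ℝ b x)
    (eq1 : pt h x t + px (fun x t => h x t * vx x t) x t = 0)
    (eq2 : pt (fun x t => h x t * vx x t) x t
      + px (fun x t => h x t * vx x t ^ 2 - h x t * Bx x t ^ 2 + g * h x t ^ 2 / 2) x t
      = -(g * h x t * deriv b x))
    (eq3 : pt (fun x t => h x t * vy x t) x t
      + px (fun x t => h x t * vx x t * vy x t - h x t * Bx x t * By x t) x t = 0)
    (eq4 : pt (fun x t => h x t * Bx x t) x t
      = -(vx x t * px (fun x t => h x t * Bx x t) x t))
    (eq5 : pt (fun x t => h x t * By x t) x t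
      + px (fun x t => h x t * (vx x t * By x t - Bx x t * vy x t)) x t
      = -(vy x t * px (fun x t => h x t * Bx x t) x t)) :
    pt (fun x t => h x t * (vx x t ^ 2 + vy x t ^ 2 + Bx x t ^ 2 + By x t ^ 2) / 2
        + g * h x t ^ 2 / 2 + g * h x t * b x) x t
      + px (fun x t => ((vx x t ^ 2 + vy x t ^ 2 + Bx x t ^ 2 + By x t ^ 2) / 2
            + g * h x t + g * b x) * h x t * vx x t
          - h x t * Bx x t * (vx x t * Bx x t + vy x t * By x t)) x t = 0 := by
  obtain ⟨hh_x, hh_t⟩ := differentiableAt_slices_of_uncurry hh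
  obtain ⟨hvx_x, hvx_t⟩ := differentiableAt_slices_of_uncurry hvx
  obtain ⟨hvy_x, hvy_t⟩ := differentiableAt_slices_of_uncurry hvy
  obtain ⟨hBx_x, hBx_t⟩ := differentiableAt_slices_of_uncurry hBx
  obtain ⟨hBy_x, hBy_t⟩ := differentiableAt_slices_of_uncurry hBy
  have momentum_x : pt (fun x t => h x t * vx x t) x t
      + px (fun x t => h x t * vx x t * vx x t - h x t * Bx x t * Bx x t) x t
      = -(g * h x t * (px h x t + deriv b x)) := by
    rw [px_add_hydrostatic_pressure g (by fun_prop) hh_x] at eq2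
    simp only [mul_assoc, ← pow_two] at eq2 ⊢
    linear_combination eq2
  have induction_x : pt (fun x t => h x t * Bx x t) x t
      + px (fun x t => h x t * vx x t * Bx x t - h x t * Bx x t * vx x t) x t
      = -(vx x t * px (fun x t => h x t * Bx x t) x t) := by
    simpa [px, mul_right_comm] using eq4
  have induction_y : pt (fun x t => h x t * By x t) x t
      + px (fun x t => h x t * vx x t * By x t - h x t * Bx x t * vy x t) x t
      = -(vy x t * px (fun x t => h x t * Bx x t) x t) := by
    simpa only [mul_sub, ← mul_assoc] using eq5
  have hm : DifferentiableAt ℝ (fun x' => h x' t * vx x' t) x := hh_x.fun_mul hvx_x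
  have hn : DifferentiableAt ℝ (fun x' => h x' t * Bx x' t) x := hh_x.fun_mul hBx_x
  have energy_x := kinetic_magnetic_energy_balance hh_t hm hn hvx hBx eq1 momentum_x induction_x
  have energy_y := kinetic_magnetic_energy_balance hh_t hm hn hvy hBy eq1 eq3 induction_y
  have potential := potential_energy_balance g hh hm hb eq1
  have total := balance_add (balance_add energy_x energy_y) potential
  convert total using 1
  · congr 2 <;> (funext x t; ring)
  · ring

/-- entropy identity for smooth solutions of the modified 1D
SWMHD system with the Janhunen source term: `∂ₜη + ∂ₓq₁ = 0`. -/
theorem smooth_entropy_identity (g : ℝ)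
    (h vx vy Bx By : ℝ → ℝ → ℝ) (b : ℝ → ℝ)
    (hh : ContDiff ℝ 1 (Function.uncurry h))
    (hvx : ContDiff ℝ 1 (Function.uncurry vx))
    (hvy : ContDiff ℝ 1 (Function.uncurry vy))
    (hBx : ContDiff ℝ 1 (Function.uncurry Bx))
    (hBy : ContDiff ℝ 1 (Function.uncurry By))
    (hb : ContDiff ℝ 1 b)
    (hpos : ∀ x t, 0 < h x t)
    (eq1 : ∀ x t, pt h x t + px (fun x t => h x t * vx x t) x t = 0)
    (eq2 : ∀ x t, pt (fun x t => h x t * vx x t) x t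
      + px (fun x t => h x t * vx x t ^ 2 - h x t * Bx x t ^ 2 + g * h x t ^ 2 / 2) x t
      = -(g * h x t * deriv b x))
    (eq3 : ∀ x t, pt (fun x t => h x t * vy x t) x t
      + px (fun x t => h x t * vx x t * vy x t - h x t * Bx x t * By x t) x t = 0)
    (eq4 : ∀ x t, pt (fun x t => h x t * Bx x t) x t
      = -(vx x t * px (fun x t => h x t * Bx x t) x t))
    (eq5 : ∀ x t, pt (fun x t => h x t * By x t) x t
      + px (fun x t => h x t * (vx x t * By x t - Bx x t * vy x t)) x t
      = -(vy x t * px (fun x t => h x t * Bx x t) x t)) :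
    ∀ x t,
      pt (fun x t => h x t * (vx x t ^ 2 + vy x t ^ 2 + Bx x t ^ 2 + By x t ^ 2) / 2
        + g * h x t ^ 2 / 2 + g * h x t * b x) x t
      + px (fun x t => ((vx x t ^ 2 + vy x t ^ 2 + Bx x t ^ 2 + By x t ^ 2) / 2
            + g * h x t + g * b x) * h x t * vx x t
          - h x t * Bx x t * (vx x t * Bx x t + vy x t * By x t)) x t = 0 :=
  fun x t => smooth_entropy_identity_general g
    (hh.differentiable one_ne_zero _) (hvx.differentiable one_ne_zero _)
    (hvy.differentiable one_ne_zero _) (hBx.differentiable one_ne_zero _)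
    (hBy.differentiable one_ne_zero _) (hb.differentiable one_ne_zero _)
    (eq1 x t) (eq2 x t) (eq3 x t) (eq4 x t) (eq5 x t)
end
end

section
/- (The positivity-preserving flux limiter preserves the lower bound.) Let ε be a real number and let h_LF⁺, h_LF⁻, h_k⁺, h_k⁻ be real numbers with h_LF⁺ > ε and h_LF⁻ > ε. Define θ^± := (h_LF^± − ε)/(h_LF^± − h_k^±) if h_k^± < ε, and θ^± := 1 otherwise, and set θ := min(θ⁺, θ⁻). Then θ ∈ [0,1] and the limited update satisfies ½·(θ·h_k⁺ + (1−θ)·h_LF⁺) + ½·(θ·h_k⁻ + (1−θ)·h_LF⁻) ≥ ε. -/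
/-! On each side the scaling factor is the largest `t ∈ [0, 1]` for which the convex combination
`t * k + (1 - t) * a` of the high-order value `k` and the low-order value `a` stays at or above `ε`.
The admissible `t` form an interval starting at `0`, because `ε ≤ a`. Hence the smaller of the two
factors is admissible on both sides, and averaging the two bounds gives the result. -/

section Limiter

variable {K : Type*} [Field K] [LinearOrder K]

/-- The one-sided scaling factor `θ^±` of the positivity-preserving limiter, for the threshold `ε`,
the Lax–Friedrichs contribution `a = h_LF^±` and the high-order contribution `k = h_k^±`. -/
def limiterScale (ε a k : K) : K :=
  if k < ε then (a - ε) / (a - k) else 1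

variable [IsStrictOrderedRing K] {ε a k t : K}

theorem le_limiterScale_iff (ha : ε ≤ a) (ht : t ∈ Set.Icc 0 1) :
    t ≤ limiterScale ε a k ↔ ε ≤ t * k + (1 - t) * a := by
  unfold limiterScale
  split_ifs with hk
  · have hka : 0 < a - k := sub_pos.2 (hk.trans_le ha)
    calc t ≤ (a - ε) / (a - k)
      _ ↔ t * (a - k) ≤ a - ε := le_div_iff₀ hka
      _ ↔ ε ≤ a - t * (a - k) := le_sub_comm
      _ ↔ ε ≤ t * k + (1 - t) * a := by ring_nf
  · have hcomb : ε ≤ t * k + (1 - t) * a :=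
      convex_Ici ε (not_lt.1 hk) ha ht.1 (sub_nonneg.2 ht.2) (add_sub_cancel t 1)
    exact iff_of_true ht.2 hcomb

theorem limiterScale_mem_Icc (ha : ε ≤ a) : limiterScale ε a k ∈ Set.Icc 0 1 := by
  constructor
  · rw [le_limiterScale_iff ha (Set.left_mem_Icc.2 zero_le_one)]
    simpa using ha
  · unfold limiterScale
    split_ifs with hk
    · exact div_le_one_of_le₀ (sub_le_sub_left hk.le a) (sub_nonneg.2 (hk.le.trans ha))
    · exact le_rfl

theorem pp_limiter_preserves_bound_general {a₁ a₂ k₁ k₂ : K} (h₁ : ε ≤ a₁) (h₂ : ε ≤ a₂) :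
    let θ := min (limiterScale ε a₁ k₁) (limiterScale ε a₂ k₂)
    θ ∈ Set.Icc 0 1 ∧
      ε ≤ (θ * k₁ + (1 - θ) * a₁) / 2 + (θ * k₂ + (1 - θ) * a₂) / 2 := by
  intro θ
  have hθ : θ ∈ Set.Icc 0 1 :=
    min_rec' (· ∈ Set.Icc 0 1) (limiterScale_mem_Icc h₁) (limiterScale_mem_Icc h₂)
  have hside₁ : ε ≤ θ * k₁ + (1 - θ) * a₁ := (le_limiterScale_iff h₁ hθ).1 (min_le_left _ _)
  have hside₂ : ε ≤ θ * k₂ + (1 - θ) * a₂ := (le_limiterScale_iff h₂ hθ).1 (min_le_right _ _)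
  refine ⟨hθ, ?_⟩
  calc ε = ε / 2 + ε / 2 := (add_halves ε).symm
    _ ≤ (θ * k₁ + (1 - θ) * a₁) / 2 + (θ * k₂ + (1 - θ) * a₂) / 2 := by gcongr

end Limiter

/-- the positivity-preserving flux limiter preserves the lower
bound: the scaling factor `θ` lies in `[0,1]` and the limited update of the
water height stays at or above the threshold `ε`. -/
theorem pp_limiter_preserves_bound (ε hLFp hLFm hkp hkm : ℝ)
    (h1 : ε < hLFp) (h2 : ε < hLFm) :
    (min (if hkp < ε then (hLFp - ε) / (hLFp - hkp) else 1)
         (if hkm < ε then (hLFm - ε) / (hLFm - hkm) else 1)) ∈ Set.Icc (0 : ℝ) 1 ∧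
    ε ≤ (min (if hkp < ε then (hLFp - ε) / (hLFp - hkp) else 1)
             (if hkm < ε then (hLFm - ε) / (hLFm - hkm) else 1) * hkp
          + (1 - min (if hkp < ε then (hLFp - ε) / (hLFp - hkp) else 1)
                 (if hkm < ε then (hLFm - ε) / (hLFm - hkm) else 1)) * hLFp) / 2
        + (min (if hkp < ε then (hLFp - ε) / (hLFp - hkp) else 1)
               (if hkm < ε then (hLFm - ε) / (hLFm - hkm) else 1) * hkm
          + (1 - min (if hkp < ε then (hLFp - ε) / (hLFp - hkp) else 1)
                 (if hkm < ε then (hLFm - ε) / (hLFm - hkm) else 1)) * hLFm) / 2 :=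
  pp_limiter_preserves_bound_general h1.le h2.le
end

section
/- (Well-balanced property of the 2D EC scheme.) Let g and C be real numbers and consider 2D grid states U_{i,j} with bottom values b_{i,j} (for the five grid points (i,j), (i±1,j), (i,j±1)) satisfying vx = vy = Bx = By = 0 at every grid point and h_{i,j} + b_{i,j} = C at every grid point. Then the right-hand side of the 2D semi-discrete EC scheme at (i,j) vanishes: (F̃₁(U_{i,j},U_{i+1,j}) − F̃₁(U_{i−1,j},U_{i,j}))/Δx + (F̃₂(U_{i,j},U_{i,j+1}) − F̃₂(U_{i,j−1},U_{i,j}))/Δy + Ψ_{i,j}ᵀ[(⟨hBx⟩_{i+1/2,j} − ⟨hBx⟩_{i−1/2,j})/Δx + (⟨hBy⟩_{i,j+1/2} − ⟨hBy⟩_{i,j−1/2})/Δy] + (G₁)_{i,j}ᵀ(⟨b⟩_{i+1/2,j} − ⟨b⟩_{i−1/2,j})/Δx + (G₂)_{i,j}ᵀ(⟨b⟩_{i,j+1/2} − ⟨b⟩_{i,j−1/2})/Δy = 0 ∈ ℝ⁵, for any mesh sizes Δx, Δy > 0. -/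
open scoped BigOperators
noncomputable section
open Matrix

open SWMHD

namespace SWMHD

/-- The y-directional EC flux `F̃₂(L,R)`. -/
def ecFluxY (g : ℝ) (L R : SWState) : Fin 5 → ℝ :=
  ![amean (fun U => U.h) L R * amean (fun U => U.vy) L R,
    amean (fun U => U.h) L R * amean (fun U => U.vy) L R * amean (fun U => U.vx) L R
      - amean (fun U => U.h * U.By) L R * amean (fun U => U.Bx) L R,
    amean (fun U => U.h) L R * (amean (fun U => U.vy) L R) ^ 2
      + g / 2 * amean (fun U => U.h ^ 2) L R
      - amean (fun U => U.h * U.By) L R * amean (fun U => U.By) L R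
      + g * (amean (fun U => U.h * U.b) L R
             - amean (fun U => U.h) L R * amean (fun U => U.b) L R),
    amean (fun U => U.h) L R * amean (fun U => U.vy) L R * amean (fun U => U.Bx) L R
      - amean (fun U => U.h * U.By) L R * amean (fun U => U.vx) L R,
    amean (fun U => U.h) L R * amean (fun U => U.vy) L R * amean (fun U => U.By) L R
      - amean (fun U => U.h * U.By) L R * amean (fun U => U.vy) L R]

/-- The y-directional bottom-topography source vector `G₂ = (0, 0, g h, 0, 0)`. -/
def G2Vec (g : ℝ) (U : SWState) : Fin 5 → ℝ := ![0, 0, g * U.h, 0, 0]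

end SWMHD

/-
On lake-at-rest data every term of the two-point flux containing a velocity or a magnetic field
drops out and only the interface pressure `g/2 ⟨h²⟩ + g (⟨hb⟩ - ⟨h⟩⟨b⟩)` is left. Since `h + b` does
not jump, this pressure collapses to `g/2 h_L h_R`, so its difference over the cell is
`g h_c (⟨h⟩₊ - ⟨h⟩₋) = -g h_c (⟨b⟩₊ - ⟨b⟩₋)`, exactly opposite to the topography source.
Only the components normal to each interface enter, and only through `⟨v⟩` and `⟨hB⟩`.
-/

namespace SWMHD

variable {L R Um Uc Up : SWState} {C : ℝ}

/-- The hydrostatic part of the EC flux, topography correction included: the term that both `ecFlux`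
and `ecFluxY` carry in their normal momentum component. -/
def interfacePressure (g : ℝ) (L R : SWState) : ℝ :=
  g / 2 * amean (fun U => U.h ^ 2) L R
    + g * (amean (fun U => U.h * U.b) L R - amean (fun U => U.h) L R * amean (fun U => U.b) L R)

theorem interfacePressure_eq_mul_add_jump (g : ℝ) (L R : SWState) :
    interfacePressure g L R = g / 2 * (L.h * R.h)
      + g / 4 * (ajump (fun U => U.h) L R * ajump (fun U => U.h + U.b) L R) := by
  simp only [interfacePressure, amean, ajump]
  ring

theorem interfacePressure_of_level_eq (g : ℝ) (hLR : L.h + L.b = R.h + R.b) :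
    interfacePressure g L R = g / 2 * (L.h * R.h) := by
  have no_jump : ajump (fun U => U.h + U.b) L R = 0 := sub_eq_zero.mpr hLR.symm
  rw [interfacePressure_eq_mul_add_jump, no_jump, mul_zero, mul_zero, add_zero]

theorem interfacePressure_sub_add_topography (g : ℝ) (hm : Um.h + Um.b = Uc.h + Uc.b)
    (hp : Uc.h + Uc.b = Up.h + Up.b) :
    interfacePressure g Uc Up - interfacePressure g Um Uc
      + g * Uc.h * (amean (fun U => U.b) Uc Up - amean (fun U => U.b) Um Uc) = 0 := by
  rw [interfacePressure_of_level_eq g hm, interfacePressure_of_level_eq g hp]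
  simp only [amean]
  linear_combination -(g / 2 * Uc.h) * (hm + hp)

/-- The interface between the `x`-neighbours `L`, `R` carries neither mass nor magnetic flux, and
the water surface does not jump across it. Velocity and magnetic field are constrained only through
the interface means of their normal components. -/
structure IsStillInterface (L R : SWState) : Prop where
  mean_vx : amean (fun U => U.vx) L R = 0
  mean_hBx : amean (fun U => U.h * U.Bx) L R = 0
  level_eq : L.h + L.b = R.h + R.b

theorem IsStillInterface.ecFlux_eq (g : ℝ) (hLR : IsStillInterface L R) :
    ecFlux g L R = ![0, interfacePressure g L R, 0, 0, 0] := by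
  simp [ecFlux, interfacePressure, hLR.mean_vx, hLR.mean_hBx]

theorem IsStillInterface.ecFlux_sub_add_G1Vec (g : ℝ) (hm : IsStillInterface Um Uc)
    (hp : IsStillInterface Uc Up) (k : Fin 5) :
    ecFlux g Uc Up k - ecFlux g Um Uc k
      + G1Vec g Uc k * (amean (fun U => U.b) Uc Up - amean (fun U => U.b) Um Uc) = 0 := by
  rw [hm.ecFlux_eq, hp.ecFlux_eq]
  fin_cases k
  · simp [G1Vec]
  · exact interfacePressure_sub_add_topography g hm.level_eq hp.level_eq
  all_goals simp [G1Vec]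

/-- The state seen after exchanging the two coordinate axes; it carries results on the
`x`-directional flux over to the `y`-directional one. -/
def swapAxes (U : SWState) : SWState := ⟨U.h, U.vy, U.vx, U.By, U.Bx, U.b⟩

/-- The permutation of the five flux components induced by exchanging the two coordinate axes. -/
def swapComponents : Fin 5 → Fin 5 := ![0, 2, 1, 4, 3]

theorem ecFluxY_eq_ecFlux_swapAxes (g : ℝ) (L R : SWState) (k : Fin 5) :
    ecFluxY g L R k = ecFlux g (swapAxes L) (swapAxes R) (swapComponents k) := by
  fin_cases k <;> rfl

theorem G2Vec_eq_G1Vec_swapAxes (g : ℝ) (U : SWState) (k : Fin 5) :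
    G2Vec g U k = G1Vec g (swapAxes U) (swapComponents k) := by
  fin_cases k <;> rfl

theorem IsStillInterface.ecFluxY_sub_add_G2Vec (g : ℝ)
    (hm : IsStillInterface (swapAxes Um) (swapAxes Uc))
    (hp : IsStillInterface (swapAxes Uc) (swapAxes Up)) (k : Fin 5) :
    ecFluxY g Uc Up k - ecFluxY g Um Uc k
      + G2Vec g Uc k * (amean (fun U => U.b) Uc Up - amean (fun U => U.b) Um Uc) = 0 := by
  simp only [ecFluxY_eq_ecFlux_swapAxes, G2Vec_eq_G1Vec_swapAxes]
  exact hm.ecFlux_sub_add_G1Vec g hp (swapComponents k)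

/-- The lake-at-rest condition at one grid point: no flow, no magnetic field, and water surface at
level `C`. -/
def IsLakeAtRest (C : ℝ) (U : SWState) : Prop :=
  U.vx = 0 ∧ U.vy = 0 ∧ U.Bx = 0 ∧ U.By = 0 ∧ U.h + U.b = C

protected theorem IsLakeAtRest.swapAxes {U : SWState} (hU : IsLakeAtRest C U) :
    IsLakeAtRest C (swapAxes U) :=
  let ⟨hvx, hvy, hBx, hBy, level⟩ := hU
  ⟨hvy, hvx, hBy, hBx, level⟩

theorem IsLakeAtRest.isStillInterface (hL : IsLakeAtRest C L) (hR : IsLakeAtRest C R) :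
    IsStillInterface L R := by
  obtain ⟨hvxL, -, hBxL, -, levelL⟩ := hL
  obtain ⟨hvxR, -, hBxR, -, levelR⟩ := hR
  exact ⟨by simp [amean, hvxL, hvxR], by simp [amean, hBxL, hBxR], levelL.trans levelR.symm⟩

theorem IsLakeAtRest.isStillInterface_swapAxes (hL : IsLakeAtRest C L) (hR : IsLakeAtRest C R) :
    IsStillInterface (swapAxes L) (swapAxes R) :=
  hL.swapAxes.isStillInterface hR.swapAxes

end SWMHD

theorem well_balanced_2d_general (g Δx Δy : ℝ) (hΔx : 0 < Δx) (hΔy : 0 < Δy)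
    (Uc Uxm Uxp Uym Uyp : SWState)
    (hxm : IsStillInterface Uxm Uc) (hxp : IsStillInterface Uc Uxp)
    (hym : IsStillInterface (swapAxes Uym) (swapAxes Uc))
    (hyp : IsStillInterface (swapAxes Uc) (swapAxes Uyp)) :
    (fun k => (ecFlux g Uc Uxp k - ecFlux g Uxm Uc k) / Δx
      + (ecFluxY g Uc Uyp k - ecFluxY g Uym Uc k) / Δy
      + PsiVec Uc k *
          ((amean (fun U => U.h * U.Bx) Uc Uxp - amean (fun U => U.h * U.Bx) Uxm Uc) / Δx
            + (amean (fun U => U.h * U.By) Uc Uyp - amean (fun U => U.h * U.By) Uym Uc) / Δy)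
      + G1Vec g Uc k * (amean (fun U => U.b) Uc Uxp - amean (fun U => U.b) Uxm Uc) / Δx
      + G2Vec g Uc k * (amean (fun U => U.b) Uc Uyp - amean (fun U => U.b) Uym Uc) / Δy)
      = (0 : Fin 5 → ℝ) := by
  funext k
  have balance_x := hxm.ecFlux_sub_add_G1Vec g hxp k
  have balance_y := IsStillInterface.ecFluxY_sub_add_G2Vec g hym hyp k
  have hBy_m : amean (fun U => U.h * U.By) Uym Uc = 0 := hym.mean_hBx
  have hBy_p : amean (fun U => U.h * U.By) Uc Uyp = 0 := hyp.mean_hBx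
  rw [hxm.mean_hBx, hxp.mean_hBx, hBy_m, hBy_p, Pi.zero_apply]
  field_simp
  linear_combination Δy * balance_x + Δx * balance_y

/-- well-balanced property of the 2D semi-discrete EC scheme.
If the velocity and magnetic field vanish and `h + b = C` at the five grid
points `(i,j)`, `(i±1,j)`, `(i,j±1)`, then the right-hand side of the 2D
semi-discrete EC scheme at `(i,j)` vanishes. -/
theorem well_balanced_2d (g C Δx Δy : ℝ) (hΔx : 0 < Δx) (hΔy : 0 < Δy)
    (Uc Uxm Uxp Uym Uyp : SWState)
    (hc : Uc.vx = 0 ∧ Uc.vy = 0 ∧ Uc.Bx = 0 ∧ Uc.By = 0 ∧ Uc.h + Uc.b = C)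
    (hxm : Uxm.vx = 0 ∧ Uxm.vy = 0 ∧ Uxm.Bx = 0 ∧ Uxm.By = 0 ∧ Uxm.h + Uxm.b = C)
    (hxp : Uxp.vx = 0 ∧ Uxp.vy = 0 ∧ Uxp.Bx = 0 ∧ Uxp.By = 0 ∧ Uxp.h + Uxp.b = C)
    (hym : Uym.vx = 0 ∧ Uym.vy = 0 ∧ Uym.Bx = 0 ∧ Uym.By = 0 ∧ Uym.h + Uym.b = C)
    (hyp : Uyp.vx = 0 ∧ Uyp.vy = 0 ∧ Uyp.Bx = 0 ∧ Uyp.By = 0 ∧ Uyp.h + Uyp.b = C) :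
    (fun k => (ecFlux g Uc Uxp k - ecFlux g Uxm Uc k) / Δx
      + (ecFluxY g Uc Uyp k - ecFluxY g Uym Uc k) / Δy
      + PsiVec Uc k *
          ((amean (fun U => U.h * U.Bx) Uc Uxp - amean (fun U => U.h * U.Bx) Uxm Uc) / Δx
            + (amean (fun U => U.h * U.By) Uc Uyp - amean (fun U => U.h * U.By) Uym Uc) / Δy)
      + G1Vec g Uc k * (amean (fun U => U.b) Uc Uxp - amean (fun U => U.b) Uxm Uc) / Δx
      + G2Vec g Uc k * (amean (fun U => U.b) Uc Uyp - amean (fun U => U.b) Uym Uc) / Δy)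
      = (0 : Fin 5 → ℝ) := by
  exact well_balanced_2d_general g Δx Δy hΔx hΔy Uc Uxm Uxp Uym Uyp
    (IsLakeAtRest.isStillInterface hxm hc) (IsLakeAtRest.isStillInterface hc hxp)
    (IsLakeAtRest.isStillInterface_swapAxes hym hc) (IsLakeAtRest.isStillInterface_swapAxes hc hyp)
end
end
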